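/- arXiv:1507.08527 — 6 statements merged into one kernel-verified Lean document; each statement's English description precedes it below -/
import Mathlib

section
/- The subset C = {(a,b,c) in R^3 : a >= 0, b >= 0, c >= 0, b >= 2c, and 2a + b >= 4c} equals the set of all linear combinations with nonnegative real coefficients of the four vectors (1,0,0), (0,1,0), (1,2,1), (0,4,1). -/
/-!
The generators `(1, 0, 0)`, `(0, 1, 0)`, `(1, m, 1)`, `(0, n, 1)` satisfy, up to scaling, the single
linear relation `(1, 0, 0) + (0, n, 1) = (1, m, 1) + (n - m) • (0, 1, 0)`, so the coefficients of a
point `(a, b, c)` form a line, parametrized by the coefficient `t` of `(1, m, 1)`. They are all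
nonnegative exactly when `0 ≤ t`, `t ≤ a`, `t ≤ c` and `0 ≤ b - n * c + (n - m) * t`. For `m ≤ n`
the last expression is monotone in `t`, so it suffices to test `t = min a c`: the case `t = a` is
the inequality `n * c ≤ (n - m) * a + b`, and the case `t = c` is `m * c ≤ b`. The theorem is the
case `m = 2`, `n = 4`.
-/

theorem exists_between_and_le_monotone_iff {α β : Type*} [LinearOrder α] [Preorder β] {f : α → β}
    (hf : Monotone f) {l u v : α} {d : β} :
    (∃ t, l ≤ t ∧ t ≤ u ∧ t ≤ v ∧ d ≤ f t) ↔ l ≤ u ∧ l ≤ v ∧ d ≤ f u ∧ d ≤ f v := by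
  constructor
  · rintro ⟨t, hl, hu, hv, hd⟩
    exact ⟨hl.trans hu, hl.trans hv, hd.trans (hf hu), hd.trans (hf hv)⟩
  · rintro ⟨hu, hv, hfu, hfv⟩
    have hmin : d ≤ f (min u v) := by
      rcases min_choice u v with h | h <;> rwa [h]
    exact ⟨min u v, le_min hu hv, min_le_left u v, min_le_right u v, hmin⟩

section Coefficients

variable {R : Type*} [CommRing R]

theorem mk_eq_combination_iff {m n a b c c₁ c₂ c₃ c₄ : R} :
    (a, b, c) = c₁ • ((1 : R), (0 : R), (0 : R)) + c₂ • ((0 : R), (1 : R), (0 : R)) +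
        c₃ • ((1 : R), m, (1 : R)) + c₄ • ((0 : R), n, (1 : R)) ↔
      c₁ = a - c₃ ∧ c₂ = b - n * c + (n - m) * c₃ ∧ c₄ = c - c₃ := by
  simp only [Prod.smul_mk, Prod.mk_add_mk, Prod.mk.injEq, smul_eq_mul]
  constructor
  · rintro ⟨rfl, rfl, rfl⟩
    refine ⟨?_, ?_, ?_⟩ <;> ring
  · rintro ⟨rfl, rfl, rfl⟩
    refine ⟨?_, ?_, ?_⟩ <;> ring

theorem exists_nonneg_combination_iff [PartialOrder R] [IsOrderedAddMonoid R] {m n a b c : R} :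
    (∃ c₁ c₂ c₃ c₄ : R, 0 ≤ c₁ ∧ 0 ≤ c₂ ∧ 0 ≤ c₃ ∧ 0 ≤ c₄ ∧
        (a, b, c) = c₁ • ((1 : R), (0 : R), (0 : R)) + c₂ • ((0 : R), (1 : R), (0 : R)) +
          c₃ • ((1 : R), m, (1 : R)) + c₄ • ((0 : R), n, (1 : R))) ↔
      ∃ t, 0 ≤ t ∧ t ≤ a ∧ t ≤ c ∧ 0 ≤ b - n * c + (n - m) * t := by
  simp only [mk_eq_combination_iff]
  constructor
  · rintro ⟨_, _, t, _, h₁, h₂, ht, h₄, rfl, rfl, rfl⟩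
    exact ⟨t, ht, sub_nonneg.1 h₁, sub_nonneg.1 h₄, h₂⟩
  · rintro ⟨t, ht, hta, htc, h₂⟩
    exact ⟨_, _, t, _, sub_nonneg.2 hta, h₂, ht, sub_nonneg.2 htc, rfl, rfl, rfl⟩

end Coefficients

theorem movable_cone_P1xP3_general {R : Type*} [CommRing R] [LinearOrder R] [IsOrderedRing R]
    {m n : R} (hmn : m ≤ n) :
    {p : R × R × R | 0 ≤ p.1 ∧ 0 ≤ p.2.2 ∧ m * p.2.2 ≤ p.2.1 ∧
        n * p.2.2 ≤ (n - m) * p.1 + p.2.1} =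
    {p : R × R × R | ∃ c₁ c₂ c₃ c₄ : R, 0 ≤ c₁ ∧ 0 ≤ c₂ ∧ 0 ≤ c₃ ∧ 0 ≤ c₄ ∧
        p = c₁ • ((1 : R), (0 : R), (0 : R)) + c₂ • ((0 : R), (1 : R), (0 : R)) +
            c₃ • ((1 : R), m, (1 : R)) + c₄ • ((0 : R), n, (1 : R))} := by
  ext ⟨a, b, c⟩
  have hmono : Monotone fun t => b - n * c + (n - m) * t :=
    (monotone_mul_left_of_nonneg (sub_nonneg.2 hmn)).const_add _
  have at_a : 0 ≤ b - n * c + (n - m) * a ↔ n * c ≤ (n - m) * a + b := by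
    rw [← sub_nonneg (b := n * c)]
    ring_nf
  have at_c : 0 ≤ b - n * c + (n - m) * c ↔ m * c ≤ b := by
    rw [← sub_nonneg (b := m * c)]
    ring_nf
  simp only [Set.mem_ofPred_eq]
  rw [exists_nonneg_combination_iff, exists_between_and_le_monotone_iff hmono, at_a, at_c,
    and_comm (a := m * c ≤ b)]

/-- The effective movable cone of the blowup of `ℙ¹ × ℙ³`:
`{(a,b,c) : a ≥ 0, b ≥ 0, c ≥ 0, b ≥ 2c, 2a + b ≥ 4c}` is the cone generated by
`(1,0,0)`, `(0,1,0)`, `(1,2,1)`, `(0,4,1)`. -/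
theorem movable_cone_P1xP3 :
    {p : ℝ × ℝ × ℝ | 0 ≤ p.1 ∧ 0 ≤ p.2.1 ∧ 0 ≤ p.2.2 ∧ 2 * p.2.2 ≤ p.2.1 ∧
        4 * p.2.2 ≤ 2 * p.1 + p.2.1} =
    {p : ℝ × ℝ × ℝ | ∃ c₁ c₂ c₃ c₄ : ℝ, 0 ≤ c₁ ∧ 0 ≤ c₂ ∧ 0 ≤ c₃ ∧ 0 ≤ c₄ ∧
        p = c₁ • ((1 : ℝ), (0 : ℝ), (0 : ℝ)) + c₂ • ((0 : ℝ), (1 : ℝ), (0 : ℝ)) +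
            c₃ • ((1 : ℝ), (2 : ℝ), (1 : ℝ)) + c₄ • ((0 : ℝ), (4 : ℝ), (1 : ℝ))} := by
  rw [← movable_cone_P1xP3_general (by norm_num : (2 : ℝ) ≤ 4)]
  exact Set.ext fun _ => ⟨fun ⟨ha, _, hc, hbc, habc⟩ => ⟨ha, hc, hbc, by linarith⟩,
    fun ⟨ha, hc, hbc, habc⟩ => ⟨ha, by linarith, hc, hbc, by linarith⟩⟩
end

section
/- The subset C = {(a,b,c) in R^3 : a >= 0, b >= 0, c >= 0, a >= b, b >= c, and 2a >= b + 3c} equals the set of all linear combinations with nonnegative real coefficients of the four vectors (1,0,0), (1,1,0), (2,1,1), (3,3,1). -/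
/-!
The plane `a = b + c` through `(1,1,0)` and `(2,1,1)` cuts the cone into two simplicial cones, one
with third generator `(1,0,0)`, the other with third generator `(3,3,1)`. Each triple of generators
has determinant `±1`, so the coefficients of a point are found without division, and the two cones
agree over any linearly ordered commutative ring, in particular over `ℤ`.
-/

section Hull

variable {R M : Type*} [Semiring R] [PartialOrder R] [IsOrderedRing R] [AddCommMonoid M]
  [Module R M]

theorem mem_hull_quadruple {v w x y z : M} :
    v ∈ PointedCone.hull R {w, x, y, z} ↔
      ∃ a b c d : R, 0 ≤ a ∧ 0 ≤ b ∧ 0 ≤ c ∧ 0 ≤ d ∧ v = a • w + b • x + c • y + d • z := by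
  rw [Submodule.mem_span_insert]
  simp_rw [Submodule.mem_span_triple]
  constructor
  · rintro ⟨⟨a, ha⟩, _, ⟨⟨b, hb⟩, ⟨c, hc⟩, ⟨d, hd⟩, rfl⟩, rfl⟩
    exact ⟨a, b, c, d, ha, hb, hc, hd, by simp only [Nonneg.mk_smul, add_assoc]⟩
  · rintro ⟨a, b, c, d, ha, hb, hc, hd, rfl⟩
    exact ⟨⟨a, ha⟩, _, ⟨⟨b, hb⟩, ⟨c, hc⟩, ⟨d, hd⟩, rfl⟩, by simp only [Nonneg.mk_smul, add_assoc]⟩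

theorem smul_add_smul_add_smul_mem_hull {x y z : M} {a b c : R} (ha : 0 ≤ a) (hb : 0 ≤ b)
    (hc : 0 ≤ c) : a • x + b • y + c • z ∈ PointedCone.hull R {x, y, z} :=
  Submodule.mem_span_triple.mpr ⟨⟨a, ha⟩, ⟨b, hb⟩, ⟨c, hc⟩, rfl⟩

end Hull

variable {R : Type*} [CommRing R] [LinearOrder R] [IsStrictOrderedRing R]

variable (R) in
/-- The effective movable cone of the blowup, by its inequalities and with coefficients in `R`;
the point `(a, b, c)` stands for the class `a L - b E - c F`. -/
def movableCone : PointedCone R (R × R × R) where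
  carrier := {p | 0 ≤ p.1 ∧ 0 ≤ p.2.1 ∧ 0 ≤ p.2.2 ∧ p.2.1 ≤ p.1 ∧ p.2.2 ≤ p.2.1 ∧
    p.2.1 + 3 * p.2.2 ≤ 2 * p.1}
  zero_mem' := by simp
  add_mem' := by
    rintro ⟨a, b, c⟩ ⟨a', b', c'⟩ ⟨ha, hb, hc, hba, hcb, h⟩ ⟨ha', hb', hc', hba', hcb', h'⟩
    refine ⟨add_nonneg ha ha', add_nonneg hb hb', add_nonneg hc hc', add_le_add hba hba',
      add_le_add hcb hcb', ?_⟩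
    change b + b' + 3 * (c + c') ≤ 2 * (a + a')
    linear_combination h + h'
  smul_mem' := by
    rintro ⟨r, hr⟩ ⟨a, b, c⟩ ⟨ha, hb, hc, hba, hcb, h⟩
    refine ⟨mul_nonneg hr ha, mul_nonneg hr hb, mul_nonneg hr hc, mul_le_mul_of_nonneg_left hba hr,
      mul_le_mul_of_nonneg_left hcb hr, ?_⟩
    change r * b + 3 * (r * c) ≤ 2 * (r * a)
    linear_combination r * h

theorem mem_hull_of_add_le {a b c : R} (hc : 0 ≤ c) (hcb : c ≤ b) (h : b + c ≤ a) :
    (a, b, c) ∈ PointedCone.hull R {((1 : R), (0 : R), (0 : R)), (1, 1, 0), (2, 1, 1)} := by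
  have expansion : (a, b, c) = (a - b - c) • ((1 : R), (0 : R), (0 : R)) +
      (b - c) • ((1 : R), (1 : R), (0 : R)) + c • ((2 : R), (1 : R), (1 : R)) := by
    simp only [Prod.smul_mk, Prod.mk_add_mk, Prod.mk.injEq, smul_eq_mul]
    exact ⟨by ring, by ring, by ring⟩
  rw [expansion]
  exact smul_add_smul_add_smul_mem_hull (by linarith) (by linarith) hc

theorem mem_hull_of_le_add {a b c : R} (hba : b ≤ a) (h : a ≤ b + c) (h' : b + 3 * c ≤ 2 * a) :
    (a, b, c) ∈ PointedCone.hull R {((1 : R), (1 : R), (0 : R)), (2, 1, 1), (3, 3, 1)} := by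
  have expansion : (a, b, c) = (2 * a - b - 3 * c) • ((1 : R), (1 : R), (0 : R)) +
      (a - b) • ((2 : R), (1 : R), (1 : R)) + (b + c - a) • ((3 : R), (3 : R), (1 : R)) := by
    simp only [Prod.smul_mk, Prod.mk_add_mk, Prod.mk.injEq, smul_eq_mul]
    exact ⟨by ring, by ring, by ring⟩
  rw [expansion]
  exact smul_add_smul_add_smul_mem_hull (by linarith) (by linarith) (by linarith)

theorem hull_le_movableCone :
    PointedCone.hull R {((1 : R), (0 : R), (0 : R)), (1, 1, 0), (2, 1, 1), (3, 3, 1)} ≤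
      movableCone R := by
  rw [Submodule.span_le]
  rintro _ (rfl | rfl | rfl | rfl) <;> refine ⟨?_, ?_, ?_, ?_, ?_, ?_⟩ <;> norm_num

theorem movableCone_le_hull :
    movableCone R ≤
      PointedCone.hull R {((1 : R), (0 : R), (0 : R)), (1, 1, 0), (2, 1, 1), (3, 3, 1)} := by
  rintro ⟨a, b, c⟩ ⟨-, -, hc, hba, hcb, h⟩
  rcases le_total (b + c) a with hle | hle
  · refine Submodule.span_mono ?_ (mem_hull_of_add_le hc hcb hle)
    exact Set.insert_subset_insert <| Set.insert_subset_insert <|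
      Set.singleton_subset_iff.mpr (Set.mem_insert _ _)
  · exact Submodule.span_mono (Set.subset_insert _ _) (mem_hull_of_le_add hba hle h)

theorem movable_cone_quadric_cone_general :
    movableCone R =
      PointedCone.hull R {((1 : R), (0 : R), (0 : R)), (1, 1, 0), (2, 1, 1), (3, 3, 1)} :=
  le_antisymm movableCone_le_hull hull_le_movableCone

/-- The effective movable cone of the blowup of the cone over a quadric threefold:
`{(a,b,c) : a ≥ 0, b ≥ 0, c ≥ 0, a ≥ b, b ≥ c, 2a ≥ b + 3c}` is the cone generated by
`(1,0,0)`, `(1,1,0)`, `(2,1,1)`, `(3,3,1)`. -/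
theorem movable_cone_quadric_cone :
    {p : ℝ × ℝ × ℝ | 0 ≤ p.1 ∧ 0 ≤ p.2.1 ∧ 0 ≤ p.2.2 ∧ p.2.1 ≤ p.1 ∧ p.2.2 ≤ p.2.1 ∧
        p.2.1 + 3 * p.2.2 ≤ 2 * p.1} =
    {p : ℝ × ℝ × ℝ | ∃ c₁ c₂ c₃ c₄ : ℝ, 0 ≤ c₁ ∧ 0 ≤ c₂ ∧ 0 ≤ c₃ ∧ 0 ≤ c₄ ∧
        p = c₁ • ((1 : ℝ), (0 : ℝ), (0 : ℝ)) + c₂ • ((1 : ℝ), (1 : ℝ), (0 : ℝ)) +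
            c₃ • ((2 : ℝ), (1 : ℝ), (1 : ℝ)) + c₄ • ((3 : ℝ), (3 : ℝ), (1 : ℝ))} :=
  Set.ext fun _ ↦ (SetLike.ext_iff.mp movable_cone_quadric_cone_general _).trans mem_hull_quadruple
end

section
/- Let G = [[2,4],[4,2]] and M = [[15,4],[-4,-1]], both 2x2 integer matrices. Then M^T * G * M = G, and M has infinite order: M^n is not the identity matrix for every integer n >= 1. -/
open Matrix

/-! The trace of a matrix of finite order is a sum of roots of unity, one for each row, so an
integer matrix whose trace exceeds its size in absolute value has infinite order. The `2 × 2` matrix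
`M` has trace `14`. -/

theorem isOfFinOrder_of_mem_spectrum {K A : Type*} [Field K] [Ring A] [Algebra K A]
    {a : A} (ha : IsOfFinOrder a) {μ : K} (hμ : μ ∈ spectrum K a) : IsOfFinOrder μ := by
  obtain ⟨n, hn, han⟩ := isOfFinOrder_iff_pow_eq_one.mp ha
  rcases subsingleton_or_nontrivial A with _ | _
  · rw [spectrum.of_subsingleton] at hμ
    exact hμ.elim
  have hμn : μ ^ n ∈ spectrum K (1 : A) := han ▸ spectrum.pow_mem_pow a n hμ
  rw [spectrum.one_eq, Set.mem_singleton_iff] at hμn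
  exact isOfFinOrder_iff_pow_eq_one.mpr ⟨n, hn, hμn⟩

section Trace

variable {ι : Type*} [Fintype ι] [DecidableEq ι]

theorem norm_trace_le_card_of_isOfFinOrder {K : Type*} [NormedField K] [IsAlgClosed K]
    {A : Matrix ι ι K} (hA : IsOfFinOrder A) : ‖A.trace‖ ≤ Fintype.card ι := by
  have norm_root : ∀ μ ∈ A.charpoly.roots, ‖μ‖ = 1 := fun μ hμ =>
    (isOfFinOrder_of_mem_spectrum hA
      (mem_spectrum_of_isRoot_charpoly (Polynomial.isRoot_of_mem_roots hμ))).norm_eq_one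
  calc ‖A.trace‖ = ‖A.charpoly.roots.sum‖ := by rw [trace_eq_sum_roots_charpoly]
    _ ≤ (A.charpoly.roots.map norm).sum := norm_multiset_sum_le _
    _ = A.charpoly.roots.card := by
      rw [Multiset.map_congr rfl norm_root, Multiset.map_const', Multiset.sum_replicate,
        nsmul_one]
    _ = Fintype.card ι := by
      rw [IsAlgClosed.card_roots_eq_natDegree, charpoly_natDegree_eq_dim]

theorem abs_trace_le_card_of_isOfFinOrder {A : Matrix ι ι ℤ} (hA : IsOfFinOrder A) :
    |A.trace| ≤ Fintype.card ι := by
  let toComplex : Matrix ι ι ℤ →+* Matrix ι ι ℂ := (Int.castRingHom ℂ).mapMatrix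
  have trace_toComplex : (toComplex A).trace = A.trace :=
    (AddMonoidHom.map_trace (Int.castRingHom ℂ) A).symm
  have norm_le : ‖(toComplex A).trace‖ ≤ Fintype.card ι :=
    norm_trace_le_card_of_isOfFinOrder (toComplex.toMonoidHom.isOfFinOrder hA)
  rw [trace_toComplex, Complex.norm_intCast] at norm_le
  exact_mod_cast norm_le

end Trace

/-- The matrix `M = [[15,4],[-4,-1]]` is an isometry of infinite order of the lattice with
Gram matrix `G = [[2,4],[4,2]]`. -/
theorem isometry_infinite_order_double_cover :
    let G : Matrix (Fin 2) (Fin 2) ℤ := !![2, 4; 4, 2]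
    let M : Matrix (Fin 2) (Fin 2) ℤ := !![15, 4; -4, -1]
    Mᵀ * G * M = G ∧ ∀ n : ℕ, 1 ≤ n → M ^ n ≠ 1 := by
  intro G M
  have isometry : Mᵀ * G * M = G := by decide
  have trace_eq : M.trace = 14 := by decide
  refine ⟨isometry, fun n hn hMn => ?_⟩
  have finite_order : IsOfFinOrder M := isOfFinOrder_iff_pow_eq_one.mpr ⟨n, hn, hMn⟩
  have trace_le : |M.trace| ≤ 2 := abs_trace_le_card_of_isOfFinOrder finite_order
  rw [trace_eq] at trace_le
  norm_num at trace_le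
end

section
/- The set of 2x2 integer matrices M satisfying M^T * G * M = G, where G = [[2,4],[4,2]], is infinite. -/
open Matrix

/-!
On the lattice with Gram matrix `[[2, s], [s, 2]]`, swapping the basis vectors `e₁, e₂` is an
isometry, and so is the involution fixing `e₁` and sending `e₂` to `s e₁ - e₂`. Their composite
`A = [[s, 1], [-1, 0]]` is a rotation. If `(a, b)` is the top row of `A ^ n`, then that of
`A ^ (n + 1)` is `(a s - b, a)`; when `2 ≤ |s|`, the inequality `|b| < |a|` propagates along this
recurrence and makes the absolute value of the top left entry strictly increasing. So `A` has
infinite order.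
-/

section GramIsometries

variable {n R : Type*} [Fintype n] [DecidableEq n] [CommSemiring R]

/-- The isometries of the bilinear form with Gram matrix `G`, as matrices acting on column
vectors. Since `G` may be degenerate, they are only bundled as a submonoid. -/
def gramIsometries (G : Matrix n n R) : Submonoid (Matrix n n R) where
  carrier := {M | Mᵀ * G * M = G}
  one_mem' := by simp
  mul_mem' {M N} hM hN := by
    rw [Set.mem_ofPred_eq] at hM hN ⊢
    calc (M * N)ᵀ * G * (M * N) = Nᵀ * (Mᵀ * G * M) * N := by
          simp only [transpose_mul, Matrix.mul_assoc]
      _ = G := by rw [hM, hN]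

lemma mem_gramIsometries {G M : Matrix n n R} : M ∈ gramIsometries G ↔ Mᵀ * G * M = G :=
  Iff.rfl

end GramIsometries

section Rotation

variable {R : Type*}

/-- The rotation `e₁ ↦ s e₁ - e₂`, `e₂ ↦ e₁` of the rank two lattice with Gram matrix
`[[2, s], [s, 2]]`. Its powers witness that the orthogonal group is infinite. -/
def gramRotation [Ring R] (s : R) : Matrix (Fin 2) (Fin 2) R :=
  !![s, 1; -1, 0]

lemma gramRotation_mem_gramIsometries [CommRing R] (s : R) :
    gramRotation s ∈ gramIsometries !![2, s; s, 2] := by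
  rw [mem_gramIsometries]
  ext i j
  fin_cases i <;> fin_cases j <;> simp [gramRotation, Matrix.mul_apply] <;> ring

lemma gramRotation_pow_succ_zero_zero [Ring R] (s : R) (n : ℕ) :
    (gramRotation s ^ (n + 1)) 0 0 = (gramRotation s ^ n) 0 0 * s - (gramRotation s ^ n) 0 1 := by
  simp [pow_succ, Matrix.mul_apply, gramRotation, sub_eq_add_neg]

lemma gramRotation_pow_succ_zero_one [Ring R] (s : R) (n : ℕ) :
    (gramRotation s ^ (n + 1)) 0 1 = (gramRotation s ^ n) 0 0 := by
  simp [pow_succ, Matrix.mul_apply, gramRotation]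

variable [Ring R] [LinearOrder R] [IsOrderedRing R] {s : R}

lemma abs_lt_abs_mul_sub {a b : R} (hs : 2 ≤ |s|) (hab : |b| < |a|) : |a| < |a * s - b| :=
  calc |a| < |a| * 2 - |b| := by rw [mul_two]; exact lt_sub_iff_add_lt.2 (by gcongr)
    _ ≤ |a| * |s| - |b| := by gcongr
    _ = |a * s| - |b| := by rw [abs_mul]
    _ ≤ |a * s - b| := abs_sub_abs_le_abs_sub _ _

lemma abs_gramRotation_pow_zero_one_lt [Nontrivial R] (hs : 2 ≤ |s|) (n : ℕ) :
    |(gramRotation s ^ n) 0 1| < |(gramRotation s ^ n) 0 0| := by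
  induction n with
  | zero => simp
  | succ n ih =>
    rw [gramRotation_pow_succ_zero_zero, gramRotation_pow_succ_zero_one]
    exact abs_lt_abs_mul_sub hs ih

lemma strictMono_abs_gramRotation_pow_zero_zero [Nontrivial R] (hs : 2 ≤ |s|) :
    StrictMono fun n : ℕ ↦ |(gramRotation s ^ n) 0 0| := by
  refine strictMono_nat_of_lt_succ fun n ↦ ?_
  rw [gramRotation_pow_succ_zero_zero]
  exact abs_lt_abs_mul_sub hs (abs_gramRotation_pow_zero_one_lt hs n)

lemma gramRotation_pow_injective [Nontrivial R] (hs : 2 ≤ |s|) :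
    Function.Injective fun n : ℕ ↦ gramRotation s ^ n :=
  .of_comp (f := fun M : Matrix (Fin 2) (Fin 2) R ↦ |M 0 0|)
    (strictMono_abs_gramRotation_pow_zero_zero hs).injective

end Rotation

theorem orthogonal_group_infinite_double_cover_general {R : Type*} [CommRing R] [LinearOrder R]
    [IsOrderedRing R] [Nontrivial R] {s : R} (hs : 2 ≤ |s|) :
    {M : Matrix (Fin 2) (Fin 2) R | Mᵀ * !![2, s; s, 2] * M = !![2, s; s, 2]}.Infinite :=
  Set.infinite_of_injective_forall_mem (gramRotation_pow_injective hs) fun n ↦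
    mem_gramIsometries.1 (pow_mem (gramRotation_mem_gramIsometries s) n)

/-- The orthogonal group of the lattice with Gram matrix `G = [[2,4],[4,2]]` is infinite. -/
theorem orthogonal_group_infinite_double_cover :
    {M : Matrix (Fin 2) (Fin 2) ℤ | Mᵀ * !![(2 : ℤ), 4; 4, 2] * M = !![(2 : ℤ), 4; 4, 2]}.Infinite :=
  orthogonal_group_infinite_double_cover_general (by norm_num)
end

section
/- Let G be the 4x4 integer matrix with all diagonal entries 0 and all off-diagonal entries 2, and let M be the 4x4 integer matrix with rows (1,2,6,4), (0,-1,-2,-2), (0,2,3,2), (0,0,0,1). Then M^T * G * M = G, and M has infinite order: M^n is not the identity matrix for every integer n >= 1. -/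
open Matrix

/-!
Write `Lᵢ` for the standard basis. The matrix `M` is the Eichler transvection attached to the
isotropic class `L₁` and the class `L₃ - L₂` orthogonal to it. Eichler transvections are isometries,
and those attached to a fixed isotropic vector compose additively in the orthogonal vector. Hence
`M ^ n` is the transvection attached to `L₁` and `n (L₃ - L₂)`, and it moves `L₂` by a vector that
is not a multiple of `L₁`.
-/

section EichlerTransvection

variable {R V : Type*} [CommRing R] [AddCommGroup V] [Module R V]

/-- The Eichler transvection `x ↦ x + B(x, e) v - B(x, v) e - q B(x, e) e` of a bilinear form `B`,
meant for an isotropic vector `e` and a vector `v` orthogonal to `e`. The scalar `q` stands for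
`B(v, v) / 2`; it is a separate argument so that `2` need not be invertible in `R`. -/
def eichlerTransvection (B : LinearMap.BilinForm R V) (e v : V) (q : R) : Module.End R V :=
  1 + (B.flip e).smulRight v - (B.flip v).smulRight e - q • (B.flip e).smulRight e

variable {B : LinearMap.BilinForm R V} {e v w : V} {q r : R}

theorem eichlerTransvection_apply (x : V) :
    eichlerTransvection B e v q x = x + B x e • v - B x v • e - (q * B x e) • e := by
  simp [eichlerTransvection, mul_smul]

theorem bilinForm_eichlerTransvection_eichlerTransvection (hB : B.IsSymm) (he : B e e = 0)
    (hev : B e v = 0) (hq : B v v = 2 * q) (x y : V) :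
    B (eichlerTransvection B e v q x) (eichlerTransvection B e v q y) = B x y := by
  have hve : B v e = 0 := by rw [hB.eq, hev]
  simp only [eichlerTransvection_apply, map_add, map_sub, map_smul, LinearMap.add_apply,
    LinearMap.sub_apply, LinearMap.smul_apply, smul_eq_mul, he, hev, hve, hq, hB.eq e y, hB.eq v y]
  ring

theorem eichlerTransvection_mul (he : B e e = 0) (hev : B e v = 0) (hwe : B w e = 0) :
    eichlerTransvection B e v q * eichlerTransvection B e w r =
      eichlerTransvection B e (v + w) (q + r + B w v) := by
  ext x
  simp only [Module.End.mul_apply, eichlerTransvection_apply, map_add, map_sub, map_smul, he, hev,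
    hwe]
  module

theorem eichlerTransvection_pow (he : B e e = 0) (hev : B e v = 0) (hve : B v e = 0)
    (hq : B v v = 2 * q) (n : ℕ) :
    eichlerTransvection B e v q ^ n = eichlerTransvection B e ((n : R) • v) (n ^ 2 * q) := by
  induction n with
  | zero => ext x; simp [eichlerTransvection_apply]
  | succ n ih =>
    have hev' : B e ((n : R) • v) = 0 := by rw [map_smul, hev, smul_zero]
    rw [pow_succ, ih, eichlerTransvection_mul he hev' hve]
    congr 1
    · push_cast
      module
    · rw [map_smul, smul_eq_mul, hq]
      push_cast
      ring

theorem not_isOfFinOrder_eichlerTransvection [NoZeroDivisors R] [CharZero R] (he : B e e = 0)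
    (hev : B e v = 0) (hve : B v e = 0) (hq : B v v = 2 * q)
    (hli : LinearIndependent R ![e, v]) {x : V} (hx : B x e ≠ 0) :
    ¬ IsOfFinOrder (eichlerTransvection B e v q) := by
  rw [isOfFinOrder_iff_pow_eq_one]
  rintro ⟨n, hn, hpow⟩
  have hfix : eichlerTransvection B e ((n : R) • v) (n ^ 2 * q) x = x := by
    rw [← eichlerTransvection_pow he hev hve hq, hpow, Module.End.one_apply]
  have hrel : (-(n * B x v) - n ^ 2 * q * B x e) • e + (n * B x e) • v = 0 := by
    rw [← sub_eq_zero.mpr hfix, eichlerTransvection_apply, map_smul, smul_eq_mul]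
    module
  have hcoeff : (n : R) * B x e = 0 := (LinearIndependent.pair_iff.mp hli _ _ hrel).2
  exact mul_ne_zero (Nat.cast_ne_zero.mpr hn.ne') hx hcoeff

end EichlerTransvection

theorem transpose_mul_mul_eq_iff_forall_toBilin' {R n : Type*} [CommSemiring R] [Fintype n]
    [DecidableEq n] {G M : Matrix n n R} :
    Mᵀ * G * M = G ↔ ∀ x y, toBilin' G (toLin' M x) (toLin' M y) = toBilin' G x y := by
  rw [← Matrix.toBilin'.injective.eq_iff, ← Matrix.toBilin'_comp, LinearMap.ext_iff₂]
  rfl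

/-- The translation automorphism `τ¹₃₂` acts on the Picard lattice of the generic K3 fiber
(Gram matrix: 0 on the diagonal, 2 off the diagonal) as an isometry of infinite order. -/
theorem translation_isometry_infinite_order :
    let G : Matrix (Fin 4) (Fin 4) ℤ := Matrix.of fun i j => if i = j then 0 else 2
    let M : Matrix (Fin 4) (Fin 4) ℤ := !![1, 2, 6, 4; 0, -1, -2, -2; 0, 2, 3, 2; 0, 0, 0, 1]
    Mᵀ * G * M = G ∧ ∀ n : ℕ, 1 ≤ n → M ^ n ≠ 1 := by
  intro G M
  -- `L i` is the class `Lᵢ₊₁`: the classes are numbered from `1`, the coordinates from `0`.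
  let L := Pi.basisFun ℤ (Fin 4)
  let B := toBilin' G
  have hL (i j : Fin 4) : B (L i) (L j) = if i = j then 0 else 2 := by simp [B, L, G]
  have hM : toLin' M = eichlerTransvection B (L 0) (L 2 - L 1) (-2) := by
    refine L.ext fun j => ?_
    rw [eichlerTransvection_apply, map_sub, hL, hL, hL]
    simp only [L, Pi.basisFun_apply, toLin'_apply, mulVec_single_one]
    revert j
    decide
  have hB : B.IsSymm := isSymm_toBilin'_iff_isSymm.mpr (by decide)
  have he : B (L 0) (L 0) = 0 := hL 0 0
  have hev : B (L 0) (L 2 - L 1) = 0 := by simp [hL]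
  have hve : B (L 2 - L 1) (L 0) = 0 := by simp [hL]
  have hq : B (L 2 - L 1) (L 2 - L 1) = 2 * (-2) := by simp [hL]
  have hx : B (L 1) (L 0) ≠ 0 := by simp [hL]
  have hli : LinearIndependent ℤ ![L 0, L 2 - L 1] := LinearIndependent.pair_iff.mpr fun s t h =>
    ⟨by simpa [L] using congrFun h 0, by simpa [L] using congrFun h 2⟩
  refine ⟨transpose_mul_mul_eq_iff_forall_toBilin'.mpr fun x y => ?_, fun n hn hpow => ?_⟩
  · rw [hM]
    exact bilinForm_eichlerTransvection_eichlerTransvection hB he hev hq x y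
  · have hE : ¬ IsOfFinOrder (toLinAlgEquiv' M) :=
      hM ▸ not_isOfFinOrder_eichlerTransvection he hev hve hq hli hx
    exact hE (isOfFinOrder_iff_pow_eq_one.mpr ⟨n, hn, by rw [← map_pow, hpow, map_one]⟩)
end

section
/- The set of 2x2 integer matrices M satisfying M^T * G * M = G, where G = [[4,6],[6,4]], is infinite. -/
open Matrix

/-!
Let `G = !![a, b; b, c]`, let `d = b² - ac = -det G`, and let `J = !![-b, -c; a, b]`. Then
`Jᵀ * G = -(G * J)` and `J² = d`, so `t + u J` is an isometry of `G` as soon as `t² - d u² = 1`. If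
`d` is positive and not a square, then `a ≠ 0`, so distinct solutions of this Pell equation give
distinct isometries, and there are infinitely many solutions. Here `d = 20`.
-/

section Automorph

variable {R : Type*} [CommRing R]

/-- The matrix `t + u J` with `J = !![-b, -c; a, b]`, classically called an automorph of the binary
quadratic form `a x² + 2b xy + c y²` when `(t, u)` solves the Pell equation
`t² - (b² - ac) u² = 1`. -/
def automorph (a b c t u : R) : Matrix (Fin 2) (Fin 2) R :=
  !![t - b * u, -(c * u); a * u, t + b * u]

lemma automorph_transpose_mul_mul (a b c t u : R) :
    (automorph a b c t u)ᵀ * !![a, b; b, c] * automorph a b c t u =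
      (t ^ 2 - (b ^ 2 - a * c) * u ^ 2) • !![a, b; b, c] := by
  ext i j
  simp only [automorph, Matrix.mul_apply, Fin.sum_univ_two, transpose_apply, Matrix.smul_apply,
    smul_eq_mul]
  fin_cases i <;> fin_cases j <;> dsimp <;> ring

lemma automorph_injective2 [NoZeroDivisors R] {a : R} (ha : a ≠ 0) (b c : R) :
    Function.Injective2 (automorph a b c) := by
  intro t t' u u' h
  have hu : u = u' := mul_left_cancel₀ ha (congrFun₂ h 1 0)
  subst hu
  exact ⟨sub_left_injective (congrFun₂ h 0 0), rfl⟩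

end Automorph

lemma infinite_pell_solution₁ {d : ℤ} (hd : 0 < d) (hsq : ¬IsSquare d) :
    Infinite (Pell.Solution₁ d) := by
  obtain ⟨s, hs⟩ := Pell.IsFundamental.exists_of_not_isSquare hd hsq
  exact Infinite.of_injective (fun n : ℤ => s ^ n)
    (Function.Injective.of_comp (f := Pell.Solution₁.y) hs.y_strictMono.injective)

theorem orthogonal_group_infinite_P3xP3_general {a b c : ℤ} (hpos : 0 < b ^ 2 - a * c)
    (hsq : ¬IsSquare (b ^ 2 - a * c)) :
    {M : Matrix (Fin 2) (Fin 2) ℤ | Mᵀ * !![a, b; b, c] * M = !![a, b; b, c]}.Infinite := by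
  have ha : a ≠ 0 := by
    rintro rfl
    exact hsq ⟨b, by ring⟩
  have := infinite_pell_solution₁ hpos hsq
  refine Set.infinite_of_injective_forall_mem
    (f := fun s : Pell.Solution₁ (b ^ 2 - a * c) => automorph a b c s.x s.y) ?_ fun s => ?_
  · intro s s' h
    obtain ⟨hx, hy⟩ := automorph_injective2 ha b c h
    exact Pell.Solution₁.ext hx hy
  · rw [Set.mem_ofPred_eq, automorph_transpose_mul_mul, s.prop, one_smul]

/-- The orthogonal group of the lattice with Gram matrix `G = [[4,6],[6,4]]` is infinite. -/
theorem orthogonal_group_infinite_P3xP3 :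
    {M : Matrix (Fin 2) (Fin 2) ℤ | Mᵀ * !![(4 : ℤ), 6; 6, 4] * M = !![(4 : ℤ), 6; 6, 4]}.Infinite :=
  orthogonal_group_infinite_P3xP3_general (by norm_num) (by norm_num)
end
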